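/- arXiv:1402.1675 — 3 statements merged into one kernel-verified Lean document; each statement's English description precedes it below -/
import Mathlib

section
/- Let G be a finite group acting on the rational function field K(x_1,…,x_n) over a field K by a linear representation, i.e., σ(x_i) = Σ_{j=1}^n a_{ij}(σ) x_j with a_{ij}(σ) ∈ K for every σ ∈ G. Let x_{n+1} be an additional variable on which G acts trivially. If K(x_1,…,x_n)^G is K-rational, then K(x_1,…,x_n,x_{n+1})^G is K-rational and can be generated over K by n+1 rational functions that are homogeneous of degree 1 in the variables x_1,…,x_{n+1}. -/
noncomputable section

/-- The rational function field `K(x_i : i ∈ I)` over `K`, realized as the fraction field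
of the multivariate polynomial ring. -/
abbrev RFF (K : Type) [Field K] (I : Type) := FractionRing (MvPolynomial I K)

/-- The image of the variable `x_i` in the rational function field `K(x_i : i ∈ I)`. -/
noncomputable def Xvar (K : Type) [Field K] (I : Type) (i : I) : RFF K I :=
  algebraMap (MvPolynomial I K) (RFF K I) (MvPolynomial.X i)

/-- Permutations of the variables as `K`-algebra automorphisms of the polynomial ring. -/
def renameHom (K : Type) [Field K] (I : Type) :
    Equiv.Perm I →* (MvPolynomial I K ≃ₐ[K] MvPolynomial I K) where
  toFun σ := MvPolynomial.renameEquiv K σ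
  map_one' := MvPolynomial.renameEquiv_refl K
  map_mul' σ τ := (MvPolynomial.renameEquiv_trans K τ σ).symm

/-- The action of permutations of the variables on `K(x_i : i ∈ I)` by `K`-automorphisms,
determined by `σ(x_i) = x_{σ(i)}`. -/
noncomputable def permHom (K : Type) [Field K] (I : Type) :
    Equiv.Perm I →* (RFF K I ≃ₐ[K] RFF K I) :=
  (IsFractionRing.fieldEquivOfAlgEquivHom K (RFF K I)).comp (renameHom K I)

/-- The fixed field `K(x_i : i ∈ I)^G` of a group `G` of permutations of the variables. -/
noncomputable def fixedSub (K : Type) [Field K] (I : Type) (G : Subgroup (Equiv.Perm I)) :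
    IntermediateField K (RFF K I) :=
  IntermediateField.fixedField (G.map (permHom K I))

/-- An extension `L/K` is `K`-rational if it is purely transcendental over `K`, i.e. generated
by finitely many algebraically independent elements. -/
def IsRatExt (K : Type) [Field K] (L : Type*) [Field L] [Algebra K L] : Prop :=
  ∃ (n : ℕ) (t : Fin n → L), AlgebraicIndependent K t ∧
    IntermediateField.adjoin K (Set.range t) = ⊤

/-- A rational function `f ∈ K(x_i : i ∈ I)` is homogeneous of degree `d ∈ ℤ` if it is a
quotient of two homogeneous polynomials whose degrees differ by `d`. -/
def IsHomogRat (K : Type) [Field K] (I : Type) (f : RFF K I) (d : ℤ) : Prop :=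
  ∃ (a b : ℕ) (p q : MvPolynomial I K), p.IsHomogeneous a ∧ q.IsHomogeneous b ∧ q ≠ 0 ∧
    (a : ℤ) - (b : ℤ) = d ∧
    f = algebraMap (MvPolynomial I K) (RFF K I) p / algebraMap (MvPolynomial I K) (RFF K I) q

open Polynomial in
theorem aux_integral {K L : Type*} [Field K] [Field L] [Algebra K L]
    (H : Subgroup (L ≃ₐ[K] L)) [Finite H] (F M : IntermediateField K L)
    (hF : ∀ h ∈ H, ∀ x ∈ F, h x ∈ F)
    (hEM : IntermediateField.fixedField H ⊓ F ≤ M) (x : L) (hx : x ∈ F) : IsIntegral M x := by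
  classical
  have := Fintype.ofFinite H
  let q : F[X] := ∏ h : H, (X - C (⟨h.1 x, hF _ h.2 _ hx⟩ : F))
  let p : L[X] := ∏ h : H, (X - C (h.1 x))
  have hqp : q.map F.val.toRingHom = p := by
    simp [q, p, Polynomial.map_prod]
  have hfix : ∀ g ∈ H, p.map (g : L →+* L) = p := by
    intro g hg
    simp only [p, Polynomial.map_prod, Polynomial.map_sub, Polynomial.map_X, Polynomial.map_C]
    exact Fintype.prod_equiv (Equiv.mulLeft (⟨g, hg⟩ : H)) _ _ (fun h => by simp)
  have hc : ∀ k, p.coeff k ∈ M := by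
    intro k
    apply hEM
    refine ⟨?_, ?_⟩
    · rw [SetLike.mem_coe, IntermediateField.mem_fixedField_iff]
      intro g hg
      conv_rhs => rw [← hfix g hg]
      simp
    · rw [← hqp]
      simp
  have hl : p ∈ Polynomial.lifts (algebraMap M L) := by
    rw [Polynomial.lifts_iff_coeff_lifts]
    intro k
    exact ⟨⟨_, hc k⟩, rfl⟩
  have hm : p.Monic := monic_prod_of_monic _ _ (fun h _ => monic_X_sub_C _)
  obtain ⟨r, hr, -, hrm⟩ := Polynomial.lifts_and_degree_eq_and_monic hl hm
  refine ⟨r, hrm, ?_⟩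
  rw [← Polynomial.eval_map, hr, Polynomial.eval_prod]
  exact Finset.prod_eq_zero (Finset.mem_univ (1 : H)) (by simp)

theorem aux_fixed {K L : Type*} [Field K] [Field L] [Algebra K L]
    (H : Subgroup (L ≃ₐ[K] L)) [Finite H] (F M : IntermediateField K L)
    (hF : ∀ h ∈ H, ∀ x ∈ F, h x ∈ F) (hM : M ≤ IntermediateField.fixedField H)
    (hEM : IntermediateField.fixedField H ⊓ F ≤ M) (hgen : M ⊔ F = ⊤) :
    M = IntermediateField.fixedField H := by
  classical
  have := Fintype.ofFinite H
  refine le_antisymm hM ?_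
  let Tr : L → L := fun y => ∑ h : H, h.1 y
  have hTrF : ∀ a ∈ F, Tr a ∈ M := by
    intro a ha
    apply hEM
    refine ⟨?_, sum_mem fun h _ => hF _ h.2 _ ha⟩
    rw [SetLike.mem_coe, IntermediateField.mem_fixedField_iff]
    intro g hg
    simp only [Tr, map_sum]
    exact Fintype.sum_equiv (Equiv.mulLeft (⟨g, hg⟩ : H)) _ _ (fun h => by simp)
  -- a trace one element
  obtain ⟨c, hc⟩ : ∃ c : F, Tr c ≠ 0 := by
    by_contra! hcon
    let φ : H → (F →* L) := fun h => ((h.1 : L →* L)).comp (F.val : F →* L)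
    have hinj : Function.Injective φ := by
      intro h h' e
      have e1 : ∀ x ∈ F, h.1 x = h'.1 x := fun x hx => DFunLike.congr_fun e ⟨x, hx⟩
      have e2 : ∀ x ∈ M, h.1 x = h'.1 x := fun x hx => by
        have := (IntermediateField.mem_fixedField_iff _ _).1 (hM hx)
        rw [this _ h.2, this _ h'.2]
      have : (⊤ : IntermediateField K L) ≤ IntermediateField.fixedField
          (Subgroup.zpowers (h'.1⁻¹ * h.1)) := by
        rw [← hgen, sup_le_iff]
        constructor
        all_goals
          intro x hx
          rw [IntermediateField.mem_fixedField_iff]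
          intro f hf
          have hs : Subgroup.zpowers (h'.1⁻¹ * h.1) ≤ MulAction.stabilizer (L ≃ₐ[K] L) x := by
            rw [Subgroup.zpowers_le, MulAction.mem_stabilizer_iff, mul_smul, inv_smul_eq_iff]
            first | exact e1 x hx | exact e2 x hx
          exact hs hf
      apply Subtype.ext
      ext x
      have := (IntermediateField.mem_fixedField_iff _ _).1 (this (IntermediateField.mem_top (x := x)))
        _ (Subgroup.mem_zpowers _)
      have h3 : (h'.1⁻¹ * h.1) • x = x := this
      rw [mul_smul, inv_smul_eq_iff] at h3
      exact h3
    have hli := (linearIndependent_monoidHom F L).comp φ hinj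
    rw [Fintype.linearIndependent_iff] at hli
    have := hli (fun _ => 1) (by
      ext c
      simpa [φ, Tr] using hcon c) 1
    exact one_ne_zero this
  have htop : Submodule.span M (F : Set L) = ⊤ := by
    have h1 : IntermediateField.adjoin M (F : Set L) = ⊤ := by
      apply IntermediateField.restrictScalars_injective K
      rw [IntermediateField.restrictScalars_top, ← top_le_iff, ← hgen, sup_le_iff]
      refine ⟨fun x hx => ?_, fun x hx => IntermediateField.subset_adjoin M _ hx⟩
      exact (IntermediateField.adjoin M (F : Set L)).algebraMap_mem ⟨x, hx⟩
    have h2 := IntermediateField.adjoin_toSubalgebra_of_isAlgebraic (F := M) (S := (F : Set L))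
      (fun x hx => (aux_integral H F M hF hEM x hx).isAlgebraic)
    rw [h1, IntermediateField.top_toSubalgebra] at h2
    have h3 := Algebra.adjoin_eq_span (R := M) (F : Set L)
    rw [← h2] at h3
    have h4 : Submonoid.closure (F : Set L) = F.toSubalgebra.toSubsemiring.toSubmonoid :=
      Submonoid.closure_eq F.toSubalgebra.toSubsemiring.toSubmonoid
    rw [h4] at h3
    exact h3.symm
  intro f hf
  rw [IntermediateField.mem_fixedField_iff] at hf
  have key : ∀ y : L, Tr (c * y) ∈ M := by
    intro y
    have hy : y ∈ Submodule.span M (F : Set L) := htop ▸ Submodule.mem_top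
    induction hy using Submodule.span_induction with
    | mem y hy => exact hTrF _ (mul_mem c.2 hy)
    | zero => simp [Tr]
    | add a b _ _ ha hb =>
      have : Tr (c * (a + b)) = Tr (c * a) + Tr (c * b) := by
        simp [Tr, mul_add, Finset.sum_add_distrib]
      rw [this]; exact add_mem ha hb
    | smul m a _ ha =>
      have : Tr (c * (m • a)) = m * Tr (c * a) := by
        simp only [Tr, Finset.mul_sum]
        refine Finset.sum_congr rfl fun h _ => ?_
        rw [IntermediateField.smul_def, smul_eq_mul, map_mul, map_mul, map_mul,
          (IntermediateField.mem_fixedField_iff _ _).1 (hM m.2) _ h.2]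
        ring
      rw [this]; exact mul_mem m.2 ha
  have h5 : Tr (c * f) = Tr c * f := by
    simp only [Tr, Finset.sum_mul]
    refine Finset.sum_congr rfl fun h _ => ?_
    rw [map_mul, hf _ h.2]
  have h6 := key f
  rw [h5] at h6
  have h7 := div_mem h6 (hTrF c c.2)
  rwa [mul_div_cancel_left₀ _ hc] at h7

theorem aux_Xvar_adjoin (K : Type) [Field K] (I : Type) :
    IntermediateField.adjoin K (Set.range (Xvar K I)) = ⊤ := by
  rw [← top_le_iff]
  intro f _
  have hp : ∀ p : MvPolynomial I K, algebraMap (MvPolynomial I K) (RFF K I) p ∈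
      IntermediateField.adjoin K (Set.range (Xvar K I)) := by
    intro p
    induction p using MvPolynomial.induction_on with
    | C a =>
      have : algebraMap (MvPolynomial I K) (RFF K I) (MvPolynomial.C a) =
        algebraMap K (RFF K I) a := by
        rw [← MvPolynomial.algebraMap_eq, ← IsScalarTower.algebraMap_apply]
      rw [this]
      exact IntermediateField.algebraMap_mem _ _
    | add p q hp hq => rw [map_add]; exact add_mem hp hq
    | mul_X p i hp =>
      rw [map_mul]
      exact mul_mem hp (IntermediateField.subset_adjoin _ _ ⟨i, rfl⟩)
  obtain ⟨p, q, -, rfl⟩ := IsFractionRing.div_surjective (MvPolynomial I K) f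
  exact div_mem (hp p) (hp q)

theorem aux_Xvar_indep (K : Type) [Field K] (I : Type) :
    AlgebraicIndependent K (Xvar K I) :=
  (MvPolynomial.algebraicIndependent_X I K).map'
    (f := IsScalarTower.toAlgHom K (MvPolynomial I K) (RFF K I))
    (IsFractionRing.injective (MvPolynomial I K) (RFF K I))

open scoped IntermediateField.algebraAdjoinAdjoin in
theorem aux_isAlgebraic {K L ι : Type*} [Field K] [Field L] [Algebra K L] (y : ι → L)
    (hy : IntermediateField.adjoin K (Set.range y) = ⊤) :
    Algebra.IsAlgebraic (Algebra.adjoin K (Set.range y)) L := by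
  refine ⟨fun a => ?_⟩
  have ha : a ∈ IntermediateField.adjoin K (Set.range y) := hy ▸ IntermediateField.mem_top
  have : IsScalarTower (Algebra.adjoin K (Set.range y))
      (IntermediateField.adjoin K (Set.range y)) L := .of_algebraMap_eq fun _ => rfl
  rw [IsFractionRing.isAlgebraic_iff _ (IntermediateField.adjoin K (Set.range y))]
  exact isAlgebraic_algebraMap (⟨a, ha⟩ : IntermediateField.adjoin K (Set.range y))

theorem aux_trdeg (K : Type) [Field K] (n : ℕ) :
    Algebra.trdeg K (RFF K (Fin n)) = n := by
  apply le_antisymm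
  · have := aux_isAlgebraic _ (aux_Xvar_adjoin K (Fin n))
    refine (Algebra.IsAlgebraic.trdeg_le_cardinalMk K (Set.range (Xvar K (Fin n)))).trans ?_
    refine Cardinal.mk_range_le.trans ?_
    simp
  · simpa using (aux_Xvar_indep K (Fin n)).cardinalMk_le_trdeg

theorem aux_indep (K : Type) [Field K] (n : ℕ) (y : Fin n → RFF K (Fin n))
    (hy : IntermediateField.adjoin K (Set.range y) = ⊤) : AlgebraicIndependent K y := by
  have := aux_isAlgebraic _ hy
  exact (Algebra.IsAlgebraic.isTranscendenceBasis_of_le_trdeg_of_finite K y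
    (by rw [aux_trdeg]; simp)).1

/-- variable change -/
theorem aux_lift (K : Type) [Field K] (n : ℕ) (y : Fin n → RFF K (Fin n))
    (hy : IntermediateField.adjoin K (Set.range y) = ⊤) :
    ∃ Φ : RFF K (Fin n) →ₐ[K] RFF K (Fin n), (∀ i, Φ (Xvar K (Fin n) i) = y i) ∧
      Function.Surjective Φ := by
  have hi := aux_indep K n y hy
  rw [algebraicIndependent_iff_injective_aeval] at hi
  let Φ : RFF K (Fin n) →ₐ[K] RFF K (Fin n) := IsFractionRing.liftAlgHom hi
  have hΦ : ∀ i, Φ (Xvar K (Fin n) i) = y i := by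
    intro i
    simp only [Φ, Xvar, IsFractionRing.liftAlgHom_apply]
    rw [IsFractionRing.lift_algebraMap]
    simp
  refine ⟨Φ, hΦ, ?_⟩
  rw [← AlgHom.fieldRange_eq_top, ← top_le_iff, ← hy, IntermediateField.adjoin_le_iff]
  rintro _ ⟨i, rfl⟩
  exact ⟨_, hΦ i⟩

theorem aux_ext (K : Type) [Field K] (n : ℕ) (f g : RFF K (Fin n) →ₐ[K] RFF K (Fin n))
    (h : ∀ i, f (Xvar K (Fin n) i) = g (Xvar K (Fin n) i)) : f = g := by
  have h0 : IntermediateField.adjoin K (Set.range (Xvar K (Fin n))) ≤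
      { AlgHom.equalizer f g with
        inv_mem' := fun x (hx : f x = g x) => show f x⁻¹ = g x⁻¹ by
          rw [map_inv₀, map_inv₀, hx] } := by
    rw [IntermediateField.adjoin_le_iff]
    rintro _ ⟨i, rfl⟩
    exact h i
  rw [aux_Xvar_adjoin] at h0
  refine AlgHom.ext fun x => ?_
  exact h0 (IntermediateField.mem_top (x := x))

open scoped IntermediateField.algebraAdjoinAdjoin in
theorem aux_transc (K : Type) [Field K] (n : ℕ) :
    Transcendental (IntermediateField.adjoin K
      (Set.range fun i : Fin n => Xvar K (Fin (n + 1)) i.castSucc))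
      (Xvar K (Fin (n + 1)) (Fin.last n)) := by
  have h := (aux_Xvar_indep K (Fin (n + 1))).transcendental_adjoin
    (s := Set.range Fin.castSucc) (i := Fin.last n) (by
      rintro ⟨i, hi⟩; exact (Fin.castSucc_ne_last i) hi)
  rw [← Set.range_comp] at h
  intro h'
  apply h
  have : IsScalarTower (Algebra.adjoin K (Set.range (Xvar K (Fin (n + 1)) ∘ Fin.castSucc)))
      (IntermediateField.adjoin K (Set.range (Xvar K (Fin (n + 1)) ∘ Fin.castSucc)))
      (RFF K (Fin (n + 1))) := .of_algebraMap_eq fun _ => rfl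
  rw [IsFractionRing.isAlgebraic_iff _ (IntermediateField.adjoin K
      (Set.range (Xvar K (Fin (n + 1)) ∘ Fin.castSucc)))]
  exact h'

theorem aux_homog (K : Type) [Field K] (n : ℕ) (Φ : RFF K (Fin (n + 1)) →ₐ[K] RFF K (Fin (n + 1)))
    (hΦ : ∀ i : Fin n, Φ (Xvar K (Fin (n + 1)) i.castSucc) =
      Xvar K (Fin (n + 1)) i.castSucc / Xvar K (Fin (n + 1)) (Fin.last n))
    (f : RFF K (Fin (n + 1))) (hf : f ∈ IntermediateField.adjoin K
      (Set.range fun i : Fin n => Xvar K (Fin (n + 1)) i.castSucc)) :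
    ∃ (a : ℕ) (p q : MvPolynomial (Fin (n + 1)) K), p.IsHomogeneous a ∧ q.IsHomogeneous a ∧ q ≠ 0 ∧
      Φ f = algebraMap _ (RFF K (Fin (n + 1))) p / algebraMap _ (RFF K (Fin (n + 1))) q := by
  have hne : ∀ q : MvPolynomial (Fin (n + 1)) K, q ≠ 0 →
      algebraMap _ (RFF K (Fin (n + 1))) q ≠ 0 := fun q hq => by
    simpa using hq
  induction hf using IntermediateField.adjoin_induction with
  | mem x hx =>
    obtain ⟨i, rfl⟩ := hx
    exact ⟨1, MvPolynomial.X i.castSucc, MvPolynomial.X (Fin.last n),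
      MvPolynomial.isHomogeneous_X _ _, MvPolynomial.isHomogeneous_X _ _,
      MvPolynomial.X_ne_zero _, hΦ i⟩
  | algebraMap c =>
    refine ⟨0, MvPolynomial.C c, 1, MvPolynomial.isHomogeneous_C _ _,
      MvPolynomial.isHomogeneous_one _ _, one_ne_zero, ?_⟩
    rw [AlgHom.commutes, map_one, div_one, ← MvPolynomial.algebraMap_eq,
      ← IsScalarTower.algebraMap_apply]
  | add x y _ _ hx hy =>
    obtain ⟨a, p, q, hp, hq, h0, e⟩ := hx
    obtain ⟨a', p', q', hp', hq', h0', e'⟩ := hy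
    refine ⟨a + a', p * q' + q * p', q * q', (hp.mul hq').add (hq.mul hp'), hq.mul hq',
      mul_ne_zero h0 h0', ?_⟩
    rw [map_add, e, e', div_add_div _ _ (hne _ h0) (hne _ h0')]
    simp
  | inv x _ hx =>
    obtain ⟨a, p, q, hp, hq, h0, e⟩ := hx
    by_cases hp0 : p = 0
    · refine ⟨0, 0, 1, MvPolynomial.isHomogeneous_zero _ _ _, MvPolynomial.isHomogeneous_one _ _,
        one_ne_zero, ?_⟩
      rw [map_inv₀, e, hp0]; simp
    · exact ⟨a, q, p, hq, hp, hp0, by rw [map_inv₀, e, inv_div]⟩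
  | mul x y _ _ hx hy =>
    obtain ⟨a, p, q, hp, hq, h0, e⟩ := hx
    obtain ⟨a', p', q', hp', hq', h0', e'⟩ := hy
    refine ⟨a + a', p * p', q * q', hp.mul hp', hq.mul hq', mul_ne_zero h0 h0', ?_⟩
    rw [map_mul, e, e', div_mul_div_comm]
    simp

/-- **Adding a variable with trivial action to a linear action.**
Let `G` be a finite group acting on `K(x₁,…,xₙ,x_{n+1})` by `K`-automorphisms such that each
`g ∈ G` sends each of `x₁,…,xₙ` to a `K`-linear combination of `x₁,…,xₙ` and fixes the last
variable `x_{n+1}`. If the fixed field `K(x₁,…,xₙ)^G` (the `G`-invariant elements of the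
subfield generated by `x₁,…,xₙ`) is `K`-rational, then the full fixed field
`K(x₁,…,x_{n+1})^G` is `K`-rational, and moreover it is generated over `K` by `n+1` rational
functions that are homogeneous of degree `1`. -/
theorem rational_add_trivial_variable (K : Type) [Field K] (n : ℕ)
    (G : Type) [Group G] [Finite G]
    (ρ : G →* (RFF K (Fin (n + 1)) ≃ₐ[K] RFF K (Fin (n + 1))))
    (hlin : ∀ g : G, ∃ a : Fin n → Fin n → K, ∀ i : Fin n,
      ρ g (Xvar K (Fin (n + 1)) i.castSucc) =
        ∑ j : Fin n, algebraMap K (RFF K (Fin (n + 1))) (a i j) * Xvar K (Fin (n + 1)) j.castSucc)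
    (htriv : ∀ g : G, ρ g (Xvar K (Fin (n + 1)) (Fin.last n)) = Xvar K (Fin (n + 1)) (Fin.last n))
    (hrat : IsRatExt K ↥(IntermediateField.fixedField ρ.range ⊓
      IntermediateField.adjoin K (Set.range fun i : Fin n => Xvar K (Fin (n + 1)) i.castSucc))) :
    IsRatExt K ↥(IntermediateField.fixedField ρ.range) ∧
      ∃ v : Fin (n + 1) → RFF K (Fin (n + 1)),
        (∀ i, v i ∈ IntermediateField.fixedField ρ.range) ∧
        (∀ i, IsHomogRat K (Fin (n + 1)) (v i) 1) ∧
        IntermediateField.adjoin K (Set.range v) = IntermediateField.fixedField ρ.range := by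
  classical
    have : Finite ρ.range := inferInstanceAs (Finite (Set.range ρ))
  set z := Xvar K (Fin (n + 1)) (Fin.last n) with hz
  set F := IntermediateField.adjoin K
    (Set.range fun i : Fin n => Xvar K (Fin (n + 1)) i.castSucc) with hFdef
  set E := IntermediateField.fixedField ρ.range ⊓ F with hE
  obtain ⟨m, t, htI, htG⟩ := hrat
  let T : Fin m → RFF K (Fin (n + 1)) := fun i => (t i : RFF K (Fin (n + 1)))
  have hz0 : z ≠ 0 := by
    have := (aux_transc K n)
    intro h0
    apply this
    rw [← hz, h0]
    exact isAlgebraic_zero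
  have hzfix : z ∈ IntermediateField.fixedField ρ.range := by
    rw [IntermediateField.mem_fixedField_iff]
    rintro _ ⟨g, rfl⟩
    exact htriv g
  have hxF : ∀ i : Fin n, Xvar K (Fin (n + 1)) i.castSucc ∈ F := fun i =>
    IntermediateField.subset_adjoin _ _ ⟨i, rfl⟩
  have hTE : ∀ i, T i ∈ E := fun i => (t i).2
  have hTI : AlgebraicIndependent K T := htI.map' (f := E.val) E.val.injective
  have hTG : IntermediateField.adjoin K (Set.range T) = E := by
    have h1 := congrArg (IntermediateField.map E.val) htG
    rw [IntermediateField.adjoin_map, ← Set.range_comp] at h1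
    have h2 : IntermediateField.map E.val ⊤ = E := by
      rw [← AlgHom.fieldRange_eq_map, IntermediateField.fieldRange_val]
    rw [h2] at h1
    exact h1
  -- the family `z, T`
  let y : Fin 1 ⊕ Fin m → RFF K (Fin (n + 1)) := Sum.elim (fun _ => z) T
  have hyI : AlgebraicIndependent K y := by
    refine hTI.sumElim_of_tower (S := F) ?_ ?_
    · rintro _ ⟨i, rfl⟩
      exact ⟨⟨T i, (hTE i).2⟩, rfl⟩
    · rw [algebraicIndependent_unique_type_iff]
      exact aux_transc K n
  have hmn : m ≤ n := by
    have h := hyI.cardinalMk_le_trdeg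
    rw [aux_trdeg] at h
    have h' : ((1 + m : ℕ) : Cardinal) ≤ ((n + 1 : ℕ) : Cardinal) := by
      simpa using h
    have := Nat.cast_le.1 h'
    omega
  have hymem : ∀ i, y i ∈ IntermediateField.fixedField ρ.range := by
    rintro (i | i)
    · exact hzfix
    · exact (hTE i).1
  have hyle : IntermediateField.adjoin K (Set.range y) ≤
      IntermediateField.fixedField ρ.range := by
    rw [IntermediateField.adjoin_le_iff]
    rintro _ ⟨i, rfl⟩
    exact hymem i
  have hyG : IntermediateField.adjoin K (Set.range y) = IntermediateField.fixedField ρ.range := by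
    refine aux_fixed ρ.range F _ ?_ hyle ?_ ?_
    · rintro _ ⟨g, rfl⟩ x hx
      have : F ≤ F.comap (ρ g : RFF K (Fin (n + 1)) →ₐ[K] RFF K (Fin (n + 1))) := by
        conv_lhs => rw [hFdef]
        rw [IntermediateField.adjoin_le_iff]
        rintro _ ⟨i, rfl⟩
        obtain ⟨a, ha⟩ := hlin g
        change ρ g (Xvar K (Fin (n + 1)) i.castSucc) ∈ F
        rw [ha]
        exact sum_mem fun j _ => mul_mem (F.algebraMap_mem _) (hxF j)
      exact this hx
    · rw [← hE, ← hTG]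
      apply IntermediateField.adjoin.mono
      rintro _ ⟨i, rfl⟩
      exact ⟨Sum.inr i, rfl⟩
    · rw [← top_le_iff, ← aux_Xvar_adjoin, IntermediateField.adjoin_le_iff]
      rintro _ ⟨i, rfl⟩
      induction i using Fin.lastCases with
      | last => 
        exact (le_sup_left : _ ≤ IntermediateField.adjoin K (Set.range y) ⊔ F)
          (IntermediateField.subset_adjoin _ _ ⟨Sum.inl 0, rfl⟩)
      | cast i => exact (le_sup_right : _ ≤ IntermediateField.adjoin K (Set.range y) ⊔ F) (hxF i)
  constructor
  · refine ⟨1 + m, fun i => ⟨y (finSumFinEquiv.symm i), hymem _⟩, ?_, ?_⟩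
    · refine AlgebraicIndependent.of_comp (IntermediateField.fixedField ρ.range).val ?_
      exact hyI.comp _ finSumFinEquiv.symm.injective
    · apply IntermediateField.map_injective (IntermediateField.fixedField ρ.range).val
      rw [IntermediateField.adjoin_map, ← Set.range_comp, ← AlgHom.fieldRange_eq_map,
        IntermediateField.fieldRange_val]
      have : Set.range ((IntermediateField.fixedField ρ.range).val ∘
          fun i => (⟨y (finSumFinEquiv.symm i), hymem _⟩ : IntermediateField.fixedField ρ.range)) =
          Set.range y := finSumFinEquiv.symm.surjective.range_comp y
      rw [this, hyG]
  -- the change of variables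
  let w : Fin (n + 1) → RFF K (Fin (n + 1)) :=
    Fin.snoc (fun i : Fin n => Xvar K (Fin (n + 1)) i.castSucc / z) z
  have hw1 : ∀ i : Fin n, w i.castSucc = Xvar K (Fin (n + 1)) i.castSucc / z := fun i => by
    simp [w]
  have hw2 : w (Fin.last n) = z := by simp [w]
  have hwz : z ∈ IntermediateField.adjoin K (Set.range w) :=
    IntermediateField.subset_adjoin _ _ ⟨Fin.last n, hw2⟩
  have hw : IntermediateField.adjoin K (Set.range w) = ⊤ := by
    rw [← top_le_iff, ← aux_Xvar_adjoin, IntermediateField.adjoin_le_iff]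
    rintro _ ⟨i, rfl⟩
    induction i using Fin.lastCases with
    | last => exact hwz
    | cast i =>
      have h1 : w i.castSucc ∈ IntermediateField.adjoin K (Set.range w) :=
        IntermediateField.subset_adjoin _ _ ⟨_, rfl⟩
      rw [hw1] at h1
      have := mul_mem h1 hwz
      rwa [div_mul_cancel₀ _ hz0] at this
  obtain ⟨Φ, hΦ, hsurj⟩ := aux_lift K (n + 1) w hw
  have hΦ1 : ∀ i : Fin n, Φ (Xvar K (Fin (n + 1)) i.castSucc) =
      Xvar K (Fin (n + 1)) i.castSucc / z := fun i => by rw [hΦ, hw1]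
  have hΦ2 : Φ z = z := by rw [hz, hΦ, hw2]
  have hcomm : ∀ g : G, ∀ f, Φ (ρ g f) = ρ g (Φ f) := by
    intro g
    have : Φ.comp (ρ g : RFF K (Fin (n + 1)) →ₐ[K] RFF K (Fin (n + 1))) =
        (ρ g : RFF K (Fin (n + 1)) →ₐ[K] RFF K (Fin (n + 1))).comp Φ := by
      apply aux_ext
      intro i
      change Φ (ρ g _) = ρ g (Φ _)
      induction i using Fin.lastCases with
      | last => rw [← hz, htriv, hΦ2, htriv]
      | cast i =>
        obtain ⟨a, ha⟩ := hlin g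
        rw [hΦ1, map_div₀, ha, htriv, map_sum, Finset.sum_div]
        refine Finset.sum_congr rfl fun j _ => ?_
        rw [map_mul, AlgHom.commutes, hΦ1, mul_div_assoc]
    exact fun f => DFunLike.congr_fun this f
  have hmap : (IntermediateField.fixedField ρ.range).map Φ =
      IntermediateField.fixedField ρ.range := by
    apply le_antisymm
    · rintro _ ⟨f, hf, rfl⟩
      rw [IntermediateField.mem_fixedField_iff]
      rintro _ ⟨g, rfl⟩
      have hf' := (IntermediateField.mem_fixedField_iff _ _).1 hf (ρ g) ⟨g, rfl⟩
      change ρ g (Φ f) = Φ f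
      rw [← hcomm, hf']
    · intro f hf
      obtain ⟨h, rfl⟩ := hsurj f
      refine ⟨h, ?_, rfl⟩
      refine (IntermediateField.mem_fixedField_iff _ _).2 ?_
      rintro _ ⟨g, rfl⟩
      have hf' := (IntermediateField.mem_fixedField_iff _ _).1 hf (ρ g) ⟨g, rfl⟩
      rw [← hcomm] at hf'
      exact Φ.injective hf'
  have hΦfix : ∀ f ∈ IntermediateField.fixedField ρ.range,
      Φ f ∈ IntermediateField.fixedField ρ.range := by
    intro f hf
    rw [← hmap]
    exact ⟨f, hf, rfl⟩
  let v : Fin (n + 1) → RFF K (Fin (n + 1)) :=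
    Fin.snoc (fun i : Fin n => if h : (i : ℕ) < m then z * Φ (T ⟨i, h⟩) else 0) z
  have hv1 : ∀ i : Fin n, v i.castSucc = if h : (i : ℕ) < m then z * Φ (T ⟨i, h⟩) else 0 :=
    fun i => by simp [v]
  have hv2 : v (Fin.last n) = z := by simp [v]
  have hvfix : ∀ i, v i ∈ IntermediateField.fixedField ρ.range := by
    intro i
    induction i using Fin.lastCases with
    | last => rw [hv2]; exact hzfix
    | cast i =>
      rw [hv1]
      split_ifs with h
      · exact mul_mem hzfix (hΦfix _ (hTE _).1)
      · exact zero_mem _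
  refine ⟨v, hvfix, ?_, ?_⟩
  · intro i
    induction i using Fin.lastCases with
    | last =>
      rw [hv2]
      exact ⟨1, 0, MvPolynomial.X (Fin.last n), 1, MvPolynomial.isHomogeneous_X _ _,
        MvPolynomial.isHomogeneous_one _ _, one_ne_zero, by simp, by simp [hz, Xvar]⟩
    | cast i =>
      rw [hv1]
      split_ifs with h
      · obtain ⟨a, p, q, hp, hq, hq0, e⟩ := aux_homog K n Φ hΦ1 _ (hTE ⟨i, h⟩).2
        refine ⟨1 + a, a, MvPolynomial.X (Fin.last n) * p, q,
          (MvPolynomial.isHomogeneous_X _ _).mul hp, hq, hq0, by push_cast; ring, ?_⟩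
        rw [e, map_mul, mul_div_assoc]
        rfl
      · exact ⟨1, 0, 0, 1, MvPolynomial.isHomogeneous_zero _ _ _,
          MvPolynomial.isHomogeneous_one _ _, one_ne_zero, by simp, by simp⟩
  · apply le_antisymm
    · rw [IntermediateField.adjoin_le_iff]
      rintro _ ⟨i, rfl⟩
      exact hvfix i
    · have hvz : z ∈ IntermediateField.adjoin K (Set.range v) :=
        IntermediateField.subset_adjoin _ _ ⟨Fin.last n, hv2⟩
      rw [← hmap, ← hyG, IntermediateField.adjoin_map, IntermediateField.adjoin_le_iff]
      rintro _ ⟨_, ⟨i, rfl⟩, rfl⟩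
      rcases i with i | i
      · change Φ z ∈ _
        rw [hΦ2]
        exact hvz
      · change Φ (T i) ∈ IntermediateField.adjoin K (Set.range v)
        have h1 : v (Fin.castSucc ⟨i, i.2.trans_le hmn⟩) ∈
            IntermediateField.adjoin K (Set.range v) :=
          IntermediateField.subset_adjoin _ _ ⟨_, rfl⟩
        rw [hv1, dif_pos i.2] at h1
        have := div_mem h1 hvz
        rwa [mul_div_cancel_left₀ _ hz0] at this
end
end

section
/- Let K be a field of characteristic 2, and let V_8 ⊂ S_8 be the elementary abelian group of order 8 generated by (1,2)(3,4)(5,6)(7,8), (1,3)(2,4)(5,7)(6,8), and (1,5)(2,6)(3,7)(4,8), acting on K(x_1,…,x_8) by permuting the variables. Then the fixed field K(x_1,…,x_8)^{V_8} is generated over K by w_1 = x_1+x_2+x_3+x_4+x_5+x_6+x_7+x_8, w_2 = x_1x_2+x_3x_4+x_5x_6+x_7x_8, w_3 = x_1x_3+x_2x_4+x_5x_7+x_6x_8, w_4 = x_1x_4+x_2x_3+x_5x_8+x_6x_7, w_5 = x_1x_5+x_2x_6+x_3x_7+x_4x_8, w_6 = x_1x_6+x_2x_5+x_3x_8+x_4x_7,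 w_7 = x_1x_7+x_2x_8+x_3x_5+x_4x_6, and w_8 = x_1x_8+x_2x_7+x_3x_6+x_4x_5. -/
set_option linter.all false

noncomputable section

/-- One Artin-Schreier step. -/
theorem as_step {K L : Type} [Field K] [Field L] [Algebra K L] [CharP L 2]
    (S : Set L) (a w y : L) (σ : L ≃ₐ[K] L) (hS : ∀ s ∈ S, σ s = s) (ha : σ a = a + w)
    (hw : w ∈ IntermediateField.adjoin K S) (hw0 : w ≠ 0)
    (haw : a * (a + w) ∈ IntermediateField.adjoin K S)
    (hy : y ∈ IntermediateField.adjoin K (insert a S)) (hσ : σ y = y) :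
    y ∈ IntermediateField.adjoin K S := by
  have h2 : (2 : L) = 0 := CharTwo.two_eq_zero
  set E := IntermediateField.adjoin K S with hE
  have hfix : ∀ u ∈ E, σ u = u := by
    intro u hu
    induction hu using IntermediateField.adjoin_induction with
    | mem x hx => exact hS x hx
    | algebraMap x => exact σ.commutes x
    | add x y _ _ h1 h2 => rw [map_add, h1, h2]
    | inv x _ h => rw [map_inv₀, h]
    | mul x y _ _ h1 h2 => rw [map_mul, h1, h2]
  have key : ∃ u ∈ E, ∃ v ∈ E, y = u + v * a := by
    clear hσ
    induction hy using IntermediateField.adjoin_induction with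
    | mem x hx =>
      rcases hx with rfl | hx
      · exact ⟨0, zero_mem _, 1, one_mem _, by ring⟩
      · exact ⟨x, IntermediateField.subset_adjoin K S hx, 0, zero_mem _, by ring⟩
    | algebraMap x => exact ⟨_, E.algebraMap_mem x, 0, zero_mem _, by ring⟩
    | add x y _ _ h1 h2 =>
      obtain ⟨u, hu, v, hv, rfl⟩ := h1
      obtain ⟨u', hu', v', hv', rfl⟩ := h2
      exact ⟨u + u', add_mem hu hu', v + v', add_mem hv hv', by ring⟩
    | mul x y _ _ h1 h2 =>
      obtain ⟨u, hu, v, hv, rfl⟩ := h1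
      obtain ⟨u', hu', v', hv', rfl⟩ := h2
      refine ⟨u * u' + v * v' * (a * (a + w)),
        add_mem (mul_mem hu hu') (mul_mem (mul_mem hv hv') haw), u * v' + u' * v - v * v' * w,
        sub_mem (add_mem (mul_mem hu hv') (mul_mem hu' hv)) (mul_mem (mul_mem hv hv') hw), by ring⟩
    | inv x _ h =>
      obtain ⟨u, hu, v, hv, rfl⟩ := h
      by_cases h0 : u + v * a = 0
      · exact ⟨0, zero_mem _, 0, zero_mem _, by rw [h0]; simp⟩
      have h1 : u + v * (a + w) ≠ 0 := by
        have : σ (u + v * a) ≠ 0 := (map_ne_zero σ).2 h0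
        rwa [map_add, map_mul, hfix u hu, hfix v hv, ha] at this
      set N := u * u + u * v * w + v * v * (a * (a + w)) with hN
      have hNE : N ∈ E := add_mem (add_mem (mul_mem hu hu) (mul_mem (mul_mem hu hv) hw))
        (mul_mem (mul_mem hv hv) haw)
      have hNN : (u + v * a) * (u + v * (a + w)) = N := by
        rw [hN]; linear_combination (u * v * a) * h2
      have hN0 : N ≠ 0 := hNN ▸ mul_ne_zero h0 h1
      refine ⟨(u + v * w) * N⁻¹, mul_mem (add_mem hu (mul_mem hv hw)) (inv_mem hNE),
        v * N⁻¹, mul_mem hv (inv_mem hNE), ?_⟩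
      have e : (u + v * w) * N⁻¹ + v * N⁻¹ * a = (u + v * (a + w)) * N⁻¹ := by ring
      rw [e, eq_mul_inv_iff_mul_eq₀ hN0, ← hNN, inv_mul_cancel_left₀ h0]
  obtain ⟨u, hu, v, hv, rfl⟩ := key
  rw [map_add, map_mul, hfix u hu, hfix v hv, ha] at hσ
  have : v * w = 0 := by linear_combination hσ
  have hv0 : v = 0 := by simpa [hw0] using this
  simpa [hv0] using hu

theorem permHom_Xvar (K I : Type) [Field K] (σ : Equiv.Perm I) (i : I) :
    permHom K I σ (Xvar K I i) = Xvar K I (σ i) := by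
  simp [permHom, Xvar, renameHom]

theorem adjoin_Xvar (K I : Type) [Field K] (E : IntermediateField K (RFF K I))
    (h : ∀ i, Xvar K I i ∈ E) (y : RFF K I) : y ∈ E := by
  have hp : ∀ p : MvPolynomial I K, algebraMap (MvPolynomial I K) (RFF K I) p ∈ E := by
    intro p
    induction p using MvPolynomial.induction_on with
    | C a =>
      have := E.algebraMap_mem a
      rwa [IsScalarTower.algebraMap_apply K (MvPolynomial I K) (RFF K I)] at this
    | add p q hp hq => rw [map_add]; exact add_mem hp hq
    | mul_X p i hp => rw [map_mul]; exact mul_mem hp (h i)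
  obtain ⟨a, b, _, rfl⟩ := IsFractionRing.div_surjective (A := MvPolynomial I K) y
  exact div_mem (hp a) (hp b)

/-- The linear algebra: the variables are rational in `w`, `A`, `B`, `C`. -/
theorem x_mem {K L : Type} [Field K] [Field L] [Algebra K L] [CharP L 2]
    (E : IntermediateField K L) (x : Fin 8 → L)
    (h0 : x 0 + x 1 + x 2 + x 3 + x 4 + x 5 + x 6 + x 7 ∈ E)
    (hne : x 0 + x 1 + x 2 + x 3 + x 4 + x 5 + x 6 + x 7 ≠ 0)
    (h1 : x 0 * x 1 + x 2 * x 3 + x 4 * x 5 + x 6 * x 7 ∈ E)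
    (h2 : x 0 * x 2 + x 1 * x 3 + x 4 * x 6 + x 5 * x 7 ∈ E)
    (h3 : x 0 * x 3 + x 1 * x 2 + x 4 * x 7 + x 5 * x 6 ∈ E)
    (h4 : x 0 * x 4 + x 1 * x 5 + x 2 * x 6 + x 3 * x 7 ∈ E)
    (h5 : x 0 * x 5 + x 1 * x 4 + x 2 * x 7 + x 3 * x 6 ∈ E)
    (h6 : x 0 * x 6 + x 1 * x 7 + x 2 * x 4 + x 3 * x 5 ∈ E)
    (h7 : x 0 * x 7 + x 1 * x 6 + x 2 * x 5 + x 3 * x 4 ∈ E)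
    (hA0 : x 1 + x 3 + x 5 + x 7 ∈ E)
    (hA1 : x 2 + x 3 + x 6 + x 7 ∈ E)
    (hA2 : x 4 + x 5 + x 6 + x 7 ∈ E) :
    ∀ i, x i ∈ E := by
  have h2 : (2 : L) = 0 := CharTwo.two_eq_zero
  set w := x 0 + x 1 + x 2 + x 3 + x 4 + x 5 + x 6 + x 7 with hwd
  have hp0 : x 1 + x 7 + x 5 + x 3 ∈ E := by
    convert hA0 using 1
    grind
  have hp1 : x 2 + x 7 + x 6 + x 3 ∈ E := by
    convert hA1 using 1
    grind
  have hp2 : x 4 + x 7 + x 6 + x 5 ∈ E := by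
    convert hA2 using 1
    grind
  have hc0 : x 7 + x 6 ∈ E := by
    have e : x 7 + x 6 = ((x 0 * x 6 + x 1 * x 7 + x 2 * x 4 + x 3 * x 5) + (x 0 * x 7 + x 1 * x 6 + x 2 * x 5 + x 3 * x 4)
        + (x 2 + x 7 + x 6 + x 3) * (x 4 + x 7 + x 6 + x 5)) * w⁻¹ := by
      rw [eq_mul_inv_iff_mul_eq₀ hne, hwd]
      grind
    rw [e]
    exact mul_mem (add_mem (add_mem h6 h7) (mul_mem hp1 hp2)) (inv_mem h0)
  have hc1 : x 7 + x 5 ∈ E := by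
    have e : x 7 + x 5 = ((x 0 * x 5 + x 1 * x 4 + x 2 * x 7 + x 3 * x 6) + (x 0 * x 7 + x 1 * x 6 + x 2 * x 5 + x 3 * x 4)
        + (x 1 + x 7 + x 5 + x 3) * (x 4 + x 7 + x 6 + x 5)) * w⁻¹ := by
      rw [eq_mul_inv_iff_mul_eq₀ hne, hwd]
      grind
    rw [e]
    exact mul_mem (add_mem (add_mem h5 h7) (mul_mem hp0 hp2)) (inv_mem h0)
  have hc2 : x 7 + x 3 ∈ E := by
    have e : x 7 + x 3 = ((x 0 * x 3 + x 1 * x 2 + x 4 * x 7 + x 5 * x 6) + (x 0 * x 7 + x 1 * x 6 + x 2 * x 5 + x 3 * x 4)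
        + (x 1 + x 7 + x 5 + x 3) * (x 2 + x 7 + x 6 + x 3)) * w⁻¹ := by
      rw [eq_mul_inv_iff_mul_eq₀ hne, hwd]
      grind
    rw [e]
    exact mul_mem (add_mem (add_mem h3 h7) (mul_mem hp0 hp1)) (inv_mem h0)
  have hx7 : x 7 ∈ E := by
    have e : x 7 = ((x 0 * x 7 + x 1 * x 6 + x 2 * x 5 + x 3 * x 4)
        + ((x 7 + x 6) * (x 1 + x 3 + x 5 + x 7) + (x 7 + x 5) * (x 2 + x 3 + x 6 + x 7) + (x 7 + x 3) * (x 4 + x 5 + x 6 + x 7))) * w⁻¹ := by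
      rw [eq_mul_inv_iff_mul_eq₀ hne, hwd]
      grind
    rw [e]
    exact mul_mem (add_mem h7 (add_mem (add_mem (mul_mem hc0 hA0) (mul_mem hc1 hA1))
      (mul_mem hc2 hA2))) (inv_mem h0)
  have hx6 : x 6 ∈ E := by simpa using sub_mem hc0 hx7
  have hx5 : x 5 ∈ E := by simpa using sub_mem hc1 hx7
  have hx3 : x 3 ∈ E := by simpa using sub_mem hc2 hx7
  have hx1 : x 1 ∈ E := by
    have := sub_mem (sub_mem (sub_mem hA0 hx3) hx5) hx7
    convert this using 1
    ring
  have hx2 : x 2 ∈ E := by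
    have := sub_mem (sub_mem (sub_mem hA1 hx3) hx6) hx7
    convert this using 1
    ring
  have hx4 : x 4 ∈ E := by
    have := sub_mem (sub_mem (sub_mem hA2 hx5) hx6) hx7
    convert this using 1
    ring
  have hx0 : x 0 ∈ E := by
    have := sub_mem h0 (add_mem hx1 (add_mem hx2 (add_mem hx3 (add_mem hx4 (add_mem hx5
      (add_mem hx6 hx7))))))
    convert this using 1
    rw [hwd]
    ring
  intro i
  fin_cases i <;> assumption


set_option maxHeartbeats 1000000 in
/-- **Generators of the fixed field of the elementary abelian group `V₈` in characteristic 2.**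
Let `K` be a field of characteristic 2 and `V₈ ⊂ S₈` the elementary abelian group of order 8
generated by `(1,2)(3,4)(5,6)(7,8)`, `(1,3)(2,4)(5,7)(6,8)` and `(1,5)(2,6)(3,7)(4,8)`
(indices written `0,…,7`), acting on `K(x₁,…,x₈)` by permuting the variables. Then
`K(x₁,…,x₈)^{V₈}` is generated over `K` by `w₁ = x₁+⋯+x₈`, `w₂ = x₁x₂+x₃x₄+x₅x₆+x₇x₈`,
`w₃ = x₁x₃+x₂x₄+x₅x₇+x₆x₈`, `w₄ = x₁x₄+x₂x₃+x₅x₈+x₆x₇`, `w₅ = x₁x₅+x₂x₆+x₃x₇+x₄x₈`,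
`w₆ = x₁x₆+x₂x₅+x₃x₈+x₄x₇`, `w₇ = x₁x₇+x₂x₈+x₃x₅+x₄x₆` and `w₈ = x₁x₈+x₂x₇+x₃x₆+x₄x₅`. -/
theorem fixedField_V8_char_two (K : Type) [Field K] [CharP K 2] :
    fixedSub K (Fin 8) (Subgroup.closure
        {Equiv.swap (0 : Fin 8) 1 * Equiv.swap 2 3 * Equiv.swap 4 5 * Equiv.swap 6 7,
         Equiv.swap (0 : Fin 8) 2 * Equiv.swap 1 3 * Equiv.swap 4 6 * Equiv.swap 5 7,
         Equiv.swap (0 : Fin 8) 4 * Equiv.swap 1 5 * Equiv.swap 2 6 * Equiv.swap 3 7}) =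
      IntermediateField.adjoin K
        {Xvar K (Fin 8) 0 + Xvar K (Fin 8) 1 + Xvar K (Fin 8) 2 + Xvar K (Fin 8) 3 +
           Xvar K (Fin 8) 4 + Xvar K (Fin 8) 5 + Xvar K (Fin 8) 6 + Xvar K (Fin 8) 7,
         Xvar K (Fin 8) 0 * Xvar K (Fin 8) 1 + Xvar K (Fin 8) 2 * Xvar K (Fin 8) 3 +
           Xvar K (Fin 8) 4 * Xvar K (Fin 8) 5 + Xvar K (Fin 8) 6 * Xvar K (Fin 8) 7,
         Xvar K (Fin 8) 0 * Xvar K (Fin 8) 2 + Xvar K (Fin 8) 1 * Xvar K (Fin 8) 3 +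
           Xvar K (Fin 8) 4 * Xvar K (Fin 8) 6 + Xvar K (Fin 8) 5 * Xvar K (Fin 8) 7,
         Xvar K (Fin 8) 0 * Xvar K (Fin 8) 3 + Xvar K (Fin 8) 1 * Xvar K (Fin 8) 2 +
           Xvar K (Fin 8) 4 * Xvar K (Fin 8) 7 + Xvar K (Fin 8) 5 * Xvar K (Fin 8) 6,
         Xvar K (Fin 8) 0 * Xvar K (Fin 8) 4 + Xvar K (Fin 8) 1 * Xvar K (Fin 8) 5 +
           Xvar K (Fin 8) 2 * Xvar K (Fin 8) 6 + Xvar K (Fin 8) 3 * Xvar K (Fin 8) 7,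
         Xvar K (Fin 8) 0 * Xvar K (Fin 8) 5 + Xvar K (Fin 8) 1 * Xvar K (Fin 8) 4 +
           Xvar K (Fin 8) 2 * Xvar K (Fin 8) 7 + Xvar K (Fin 8) 3 * Xvar K (Fin 8) 6,
         Xvar K (Fin 8) 0 * Xvar K (Fin 8) 6 + Xvar K (Fin 8) 1 * Xvar K (Fin 8) 7 +
           Xvar K (Fin 8) 2 * Xvar K (Fin 8) 4 + Xvar K (Fin 8) 3 * Xvar K (Fin 8) 5,
         Xvar K (Fin 8) 0 * Xvar K (Fin 8) 7 + Xvar K (Fin 8) 1 * Xvar K (Fin 8) 6 +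
           Xvar K (Fin 8) 2 * Xvar K (Fin 8) 5 + Xvar K (Fin 8) 3 * Xvar K (Fin 8) 4} := by
  set x := Xvar K (Fin 8) with hx
  have : CharP (RFF K (Fin 8)) 2 := charP_of_injective_algebraMap
    (algebraMap K (RFF K (Fin 8))).injective 2
  have h2 : (2 : RFF K (Fin 8)) = 0 := CharTwo.two_eq_zero
  set S : Set (RFF K (Fin 8)) := {_, _, _, _, _, _, _, _} with hS
  set s1 : Equiv.Perm (Fin 8) :=
    Equiv.swap (0 : Fin 8) 1 * Equiv.swap 2 3 * Equiv.swap 4 5 * Equiv.swap 6 7 with hs1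
  set s2 : Equiv.Perm (Fin 8) :=
    Equiv.swap (0 : Fin 8) 2 * Equiv.swap 1 3 * Equiv.swap 4 6 * Equiv.swap 5 7 with hs2
  set s3 : Equiv.Perm (Fin 8) :=
    Equiv.swap (0 : Fin 8) 4 * Equiv.swap 1 5 * Equiv.swap 2 6 * Equiv.swap 3 7 with hs3
  have hperm : ∀ (s : Equiv.Perm (Fin 8)) (i : Fin 8), permHom K (Fin 8) s (x i) = x (s i) :=
    fun s i => permHom_Xvar K (Fin 8) s i
  have e10 : permHom K (Fin 8) s1 (x 0) = x 1 := by
    rw [hperm]; congr 1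
  have e11 : permHom K (Fin 8) s1 (x 1) = x 0 := by
    rw [hperm]; congr 1
  have e12 : permHom K (Fin 8) s1 (x 2) = x 3 := by
    rw [hperm]; congr 1
  have e13 : permHom K (Fin 8) s1 (x 3) = x 2 := by
    rw [hperm]; congr 1
  have e14 : permHom K (Fin 8) s1 (x 4) = x 5 := by
    rw [hperm]; congr 1
  have e15 : permHom K (Fin 8) s1 (x 5) = x 4 := by
    rw [hperm]; congr 1
  have e16 : permHom K (Fin 8) s1 (x 6) = x 7 := by
    rw [hperm]; congr 1
  have e17 : permHom K (Fin 8) s1 (x 7) = x 6 := by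
    rw [hperm]; congr 1
  have e20 : permHom K (Fin 8) s2 (x 0) = x 2 := by
    rw [hperm]; congr 1
  have e21 : permHom K (Fin 8) s2 (x 1) = x 3 := by
    rw [hperm]; congr 1
  have e22 : permHom K (Fin 8) s2 (x 2) = x 0 := by
    rw [hperm]; congr 1
  have e23 : permHom K (Fin 8) s2 (x 3) = x 1 := by
    rw [hperm]; congr 1
  have e24 : permHom K (Fin 8) s2 (x 4) = x 6 := by
    rw [hperm]; congr 1
  have e25 : permHom K (Fin 8) s2 (x 5) = x 7 := by
    rw [hperm]; congr 1
  have e26 : permHom K (Fin 8) s2 (x 6) = x 4 := by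
    rw [hperm]; congr 1
  have e27 : permHom K (Fin 8) s2 (x 7) = x 5 := by
    rw [hperm]; congr 1
  have e30 : permHom K (Fin 8) s3 (x 0) = x 4 := by
    rw [hperm]; congr 1
  have e31 : permHom K (Fin 8) s3 (x 1) = x 5 := by
    rw [hperm]; congr 1
  have e32 : permHom K (Fin 8) s3 (x 2) = x 6 := by
    rw [hperm]; congr 1
  have e33 : permHom K (Fin 8) s3 (x 3) = x 7 := by
    rw [hperm]; congr 1
  have e34 : permHom K (Fin 8) s3 (x 4) = x 0 := by
    rw [hperm]; congr 1
  have e35 : permHom K (Fin 8) s3 (x 5) = x 1 := by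
    rw [hperm]; congr 1
  have e36 : permHom K (Fin 8) s3 (x 6) = x 2 := by
    rw [hperm]; congr 1
  have e37 : permHom K (Fin 8) s3 (x 7) = x 3 := by
    rw [hperm]; congr 1
  have f1 : ∀ s ∈ S, permHom K (Fin 8) s1 s = s := by
    intro s hs
    simp only [hS, Set.mem_insert_iff, Set.mem_singleton_iff] at hs
    rcases hs with rfl | rfl | rfl | rfl | rfl | rfl | rfl | rfl <;>
      simp only [map_add, map_mul, e10, e11, e12, e13, e14, e15, e16, e17] <;> ring
  have f2 : ∀ s ∈ S, permHom K (Fin 8) s2 s = s := by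
    intro s hs
    simp only [hS, Set.mem_insert_iff, Set.mem_singleton_iff] at hs
    rcases hs with rfl | rfl | rfl | rfl | rfl | rfl | rfl | rfl <;>
      simp only [map_add, map_mul, e20, e21, e22, e23, e24, e25, e26, e27] <;> ring
  have f3 : ∀ s ∈ S, permHom K (Fin 8) s3 s = s := by
    intro s hs
    simp only [hS, Set.mem_insert_iff, Set.mem_singleton_iff] at hs
    rcases hs with rfl | rfl | rfl | rfl | rfl | rfl | rfl | rfl <;>
      simp only [map_add, map_mul, e30, e31, e32, e33, e34, e35, e36, e37] <;> ring
  have hle : ∀ g ∈ Subgroup.closure {s1, s2, s3}, ∀ s ∈ S, permHom K (Fin 8) g s = s := by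
    intro g hg
    induction hg using Subgroup.closure_induction with
    | mem g hg =>
      rcases hg with rfl | rfl | rfl
      · exact f1
      · exact f2
      · exact f3
    | one => intro s _; rw [map_one]; rfl
    | mul a b _ _ ha hb =>
      intro s hs
      rw [map_mul, AlgEquiv.mul_apply, hb s hs, ha s hs]
    | inv a _ ha =>
      intro s hs
      rw [map_inv]
      exact (AlgEquiv.symm_apply_eq _).2 (ha s hs).symm
  apply le_antisymm
  · intro y hy
    have hfix : ∀ g ∈ Subgroup.closure {s1, s2, s3}, permHom K (Fin 8) g y = y := by
      intro g hg
      rw [fixedSub, IntermediateField.mem_fixedField_iff] at hy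
      exact hy _ (Subgroup.mem_map_of_mem _ hg)
    have y1 := hfix s1 (Subgroup.subset_closure (by simp))
    have y2 := hfix s2 (Subgroup.subset_closure (by simp))
    have y3 := hfix s3 (Subgroup.subset_closure (by simp))
    have hsub : ∀ s ∈ S, s ∈ IntermediateField.adjoin K S :=
      fun s hs => IntermediateField.subset_adjoin K S hs
    have m0 : x 0 + x 1 + x 2 + x 3 + x 4 + x 5 + x 6 + x 7 ∈ IntermediateField.adjoin K S :=
      hsub _ (by simp [hS])
    have m1 : x 0 * x 1 + x 2 * x 3 + x 4 * x 5 + x 6 * x 7 ∈ IntermediateField.adjoin K S :=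
      hsub _ (by simp [hS])
    have m2 : x 0 * x 2 + x 1 * x 3 + x 4 * x 6 + x 5 * x 7 ∈ IntermediateField.adjoin K S :=
      hsub _ (by simp [hS])
    have m3 : x 0 * x 3 + x 1 * x 2 + x 4 * x 7 + x 5 * x 6 ∈ IntermediateField.adjoin K S :=
      hsub _ (by simp [hS])
    have m4 : x 0 * x 4 + x 1 * x 5 + x 2 * x 6 + x 3 * x 7 ∈ IntermediateField.adjoin K S :=
      hsub _ (by simp [hS])
    have m5 : x 0 * x 5 + x 1 * x 4 + x 2 * x 7 + x 3 * x 6 ∈ IntermediateField.adjoin K S :=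
      hsub _ (by simp [hS])
    have m6 : x 0 * x 6 + x 1 * x 7 + x 2 * x 4 + x 3 * x 5 ∈ IntermediateField.adjoin K S :=
      hsub _ (by simp [hS])
    have m7 : x 0 * x 7 + x 1 * x 6 + x 2 * x 5 + x 3 * x 4 ∈ IntermediateField.adjoin K S :=
      hsub _ (by simp [hS])
    have hne : x 0 + x 1 + x 2 + x 3 + x 4 + x 5 + x 6 + x 7 ≠ 0 := by
      intro h
      have h' : algebraMap (MvPolynomial (Fin 8) K) (RFF K (Fin 8)) (∑ i, MvPolynomial.X i) = 0 := by
        rw [map_sum, Fin.sum_univ_eight]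
        exact h
      rw [map_eq_zero_iff _ (IsFractionRing.injective _ _)] at h'
      have h3 := congrArg (MvPolynomial.eval (fun i : Fin 8 => if i = 0 then (1 : K) else 0)) h'
      simp at h3
    have q0 : (x 1 + x 3 + x 5 + x 7) * ((x 1 + x 3 + x 5 + x 7)
        + (x 0 + x 1 + x 2 + x 3 + x 4 + x 5 + x 6 + x 7)) ∈ IntermediateField.adjoin K S := by
      have := add_mem (add_mem (add_mem (m1) m3) m5) m7
      convert this using 1
      linear_combination ((x 1 + x 3 + x 5 + x 7) ^ 2) * h2
    have q1 : (x 2 + x 3 + x 6 + x 7) * ((x 2 + x 3 + x 6 + x 7)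
        + (x 0 + x 1 + x 2 + x 3 + x 4 + x 5 + x 6 + x 7)) ∈ IntermediateField.adjoin K S := by
      have := add_mem (add_mem (add_mem (m2) m3) m6) m7
      convert this using 1
      linear_combination ((x 2 + x 3 + x 6 + x 7) ^ 2) * h2
    have q2 : (x 4 + x 5 + x 6 + x 7) * ((x 4 + x 5 + x 6 + x 7)
        + (x 0 + x 1 + x 2 + x 3 + x 4 + x 5 + x 6 + x 7)) ∈ IntermediateField.adjoin K S := by
      have := add_mem (add_mem (add_mem (m4) m5) m6) m7
      convert this using 1
      linear_combination ((x 4 + x 5 + x 6 + x 7) ^ 2) * h2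
    have hmono : ∀ T : Set (RFF K (Fin 8)), S ⊆ T → ∀ z ∈ IntermediateField.adjoin K S,
        z ∈ IntermediateField.adjoin K T := fun T hT z hz => IntermediateField.adjoin.mono K S T hT hz
    have t2 : S ⊆ insert (x 4 + x 5 + x 6 + x 7) S := Set.subset_insert _ _
    have t1 : S ⊆ insert (x 2 + x 3 + x 6 + x 7) (insert (x 4 + x 5 + x 6 + x 7) S) :=
      t2.trans (Set.subset_insert _ _)
    have t0 : S ⊆ insert (x 1 + x 3 + x 5 + x 7) (insert (x 2 + x 3 + x 6 + x 7) (insert (x 4 + x 5 + x 6 + x 7) S)) :=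
      t1.trans (Set.subset_insert _ _)
    have hall : y ∈ IntermediateField.adjoin K (insert (x 1 + x 3 + x 5 + x 7)
        (insert (x 2 + x 3 + x 6 + x 7) (insert (x 4 + x 5 + x 6 + x 7) S))) := by
      apply adjoin_Xvar
      refine x_mem _ x (hmono _ t0 _ m0) hne (hmono _ t0 _ m1) (hmono _ t0 _ m2) (hmono _ t0 _ m3) (hmono _ t0 _ m4) (hmono _ t0 _ m5) (hmono _ t0 _ m6) (hmono _ t0 _ m7)
        (IntermediateField.subset_adjoin K _ ?_) (IntermediateField.subset_adjoin K _ ?_)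
        (IntermediateField.subset_adjoin K _ ?_)
      · exact Set.mem_insert _ _
      · exact Set.mem_insert_of_mem _ (Set.mem_insert _ _)
      · exact Set.mem_insert_of_mem _ (Set.mem_insert_of_mem _ (Set.mem_insert _ _))
    have k0 : y ∈ IntermediateField.adjoin K (insert (x 2 + x 3 + x 6 + x 7) (insert (x 4 + x 5 + x 6 + x 7) S)) := by
      refine as_step _ _ (x 0 + x 1 + x 2 + x 3 + x 4 + x 5 + x 6 + x 7) y (permHom K (Fin 8) s1) ?_ ?_
        (hmono _ t1 _ m0) hne (hmono _ t1 _ q0) hall y1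
      · intro s hs
        rcases hs with rfl | rfl | hs
        · simp only [map_add, e10, e11, e12, e13, e14, e15, e16, e17]
          ring
        · simp only [map_add, e10, e11, e12, e13, e14, e15, e16, e17]
          ring
        · exact f1 s hs
      · simp only [map_add, e10, e11, e12, e13, e14, e15, e16, e17]
        linear_combination (-(x 1 + x 3 + x 5 + x 7)) * h2
    have k1 : y ∈ IntermediateField.adjoin K (insert (x 4 + x 5 + x 6 + x 7) S) := by
      refine as_step _ _ (x 0 + x 1 + x 2 + x 3 + x 4 + x 5 + x 6 + x 7) y (permHom K (Fin 8) s2) ?_ ?_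
        (hmono _ t2 _ m0) hne (hmono _ t2 _ q1) k0 y2
      · intro s hs
        rcases hs with rfl | hs
        · simp only [map_add, e20, e21, e22, e23, e24, e25, e26, e27]
          ring
        · exact f2 s hs
      · simp only [map_add, e20, e21, e22, e23, e24, e25, e26, e27]
        linear_combination (-(x 2 + x 3 + x 6 + x 7)) * h2
    have k2 : y ∈ IntermediateField.adjoin K S := by
      refine as_step _ _ (x 0 + x 1 + x 2 + x 3 + x 4 + x 5 + x 6 + x 7) y (permHom K (Fin 8) s3) ?_ ?_
        m0 hne q2 k1 y3
      · intro s hs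
        exact f3 s hs
      · simp only [map_add, e30, e31, e32, e33, e34, e35, e36, e37]
        linear_combination (-(x 4 + x 5 + x 6 + x 7)) * h2
    exact k2
  · rw [IntermediateField.adjoin_le_iff]
    intro s hs
    rw [fixedSub, SetLike.mem_coe, IntermediateField.mem_fixedField_iff]
    rintro _ ⟨g, hg, rfl⟩
    exact hle g hg s hs
end
end

section
/- Let K(x_1,…,x_n) be the rational function field over a field K, and let f_i = Π_{k=1}^n x_k^{a_{ik}} for 1 ≤ i ≤ n be Laurent monomials with integer exponents a_{ik}. If the determinant D of the matrix (a_{ik}) is nonzero, then K(x_1,…,x_n) is a finite extension of K(f_1,…,f_n) of degree exactly |D|. -/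
noncomputable section

/-- Laurent monomial with exponent vector `v`. -/
def lmon (K : Type) [Field K] (n : ℕ) (v : Fin n → ℤ) : RFF K (Fin n) :=
  ∏ k : Fin n, Xvar K (Fin n) k ^ v k

theorem Xvar_ne_zero (K : Type) [Field K] (n : ℕ) (k : Fin n) : Xvar K (Fin n) k ≠ 0 := by
  unfold Xvar
  rw [Ne, FaithfulSMul.algebraMap_eq_zero_iff]
  exact MvPolynomial.X_ne_zero k

theorem lmon_ne_zero (K : Type) [Field K] (n : ℕ) (v : Fin n → ℤ) : lmon K n v ≠ 0 :=
  Finset.prod_ne_zero_iff.2 fun k _ => zpow_ne_zero _ (Xvar_ne_zero K n k)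

theorem lmon_zero (K : Type) [Field K] (n : ℕ) : lmon K n 0 = 1 := by
  simp [lmon]

theorem lmon_add (K : Type) [Field K] (n : ℕ) (v w : Fin n → ℤ) :
    lmon K n (v + w) = lmon K n v * lmon K n w := by
  simp only [lmon, ← Finset.prod_mul_distrib, Pi.add_apply]
  exact Finset.prod_congr rfl fun k _ => zpow_add₀ (Xvar_ne_zero K n k) _ _

theorem lmon_nsmul (K : Type) [Field K] (n : ℕ) (d : ℕ) (v : Fin n → ℤ) :
    lmon K n (d • v) = lmon K n v ^ d := by
  induction d with
  | zero => simp [lmon_zero]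
  | succ d ih => rw [succ_nsmul, lmon_add, ih, pow_succ]

theorem lmon_single (K : Type) [Field K] (n : ℕ) (k : Fin n) :
    lmon K n (Pi.single k 1) = Xvar K (Fin n) k := by
  unfold lmon
  rw [Finset.prod_eq_single k]
  · simp
  · intro j _ hj
    simp [hj]
  · simp

theorem lmon_vecMul (K : Type) [Field K] (n : ℕ) (a : Matrix (Fin n) (Fin n) ℤ)
    (w : Fin n → ℤ) :
    lmon K n (Matrix.vecMul w a) = ∏ i, lmon K n (a i) ^ w i := by
  simp only [lmon, ← Finset.prod_zpow, ← zpow_mul]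
  rw [Finset.prod_comm]
  refine Finset.prod_congr rfl fun k _ => ?_
  have h : ∀ s : Finset (Fin n), Xvar K (Fin n) k ^ (∑ i ∈ s, w i * a i k)
      = ∏ i ∈ s, Xvar K (Fin n) k ^ (a i k * w i) := by
    intro s
    induction s using Finset.induction_on with
    | empty => simp
    | insert i s hi ih =>
      rw [Finset.sum_insert hi, Finset.prod_insert hi, zpow_add₀ (Xvar_ne_zero K n k), ih,
        mul_comm (w i)]
  exact h Finset.univ

theorem lmon_nat (K : Type) [Field K] (n : ℕ) (m : Fin n →₀ ℕ) :
    lmon K n (fun k => (m k : ℤ)) =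
      algebraMap (MvPolynomial (Fin n) K) (RFF K (Fin n)) (MvPolynomial.monomial m 1) := by
  rw [MvPolynomial.monomial_eq, Finsupp.prod_fintype _ _ (by simp)]
  simp [lmon, Xvar]

theorem lmon_nat_linInd (K : Type) [Field K] (n : ℕ) :
    LinearIndependent K (fun m : Fin n →₀ ℕ => lmon K n (fun k => (m k : ℤ))) := by
  have h := (MvPolynomial.basisMonomials (Fin n) K).linearIndependent
  have h2 := h.map' (IsScalarTower.toAlgHom K (MvPolynomial (Fin n) K)
    (RFF K (Fin n))).toLinearMap (LinearMap.ker_eq_bot.2 (by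
      exact FaithfulSMul.algebraMap_injective (MvPolynomial (Fin n) K) (RFF K (Fin n))))
  have hf : (fun m : Fin n →₀ ℕ => lmon K n (fun k => (m k : ℤ))) =
      (IsScalarTower.toAlgHom K (MvPolynomial (Fin n) K) (RFF K (Fin n))).toLinearMap ∘
        (MvPolynomial.basisMonomials (Fin n) K) := by
    funext m
    simp [lmon_nat]
  rw [hf]
  exact h2

theorem lmon_linInd (K : Type) [Field K] (n : ℕ) : LinearIndependent K (lmon K n) := by
  classical
  rw [linearIndependent_iff']
  intro s g hg v hv
  -- shift
  let N : Fin n → ℤ := fun k => ∑ w ∈ s, |w k|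
  have hN : ∀ w ∈ s, ∀ k, 0 ≤ w k + N k := by
    intro w hw k
    have h1 : |w k| ≤ N k :=
      Finset.single_le_sum (f := fun w : Fin n → ℤ => |w k|) (fun _ _ => abs_nonneg _) hw
    have h2 := neg_abs_le (w k)
    linarith
  let e : (Fin n → ℤ) → (Fin n →₀ ℕ) := fun w =>
    Finsupp.equivFunOnFinite.symm fun k => (w k + N k).toNat
  have he : ∀ w ∈ s, (fun k => ((e w k : ℕ) : ℤ)) = w + N := by
    intro w hw
    funext k
    simp [e, hN w hw k]
  have hinj : Set.InjOn e s := by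
    intro w hw w' hw' h
    have := he w hw
    rw [h, he w' hw'] at this
    exact (add_right_cancel this).symm
  have key := (lmon_nat_linInd K n).comp (fun w : s => e w) (by
    intro w w' h
    exact Subtype.ext (hinj w.2 w'.2 h))
  rw [Fintype.linearIndependent_iff] at key
  refine key (fun w => g w) ?_ ⟨v, hv⟩
  have h3 : ∑ w ∈ s, g w • lmon K n (w + N) = 0 := by
    simp only [lmon_add, ← smul_mul_assoc]
    rw [← Finset.sum_mul, hg, zero_mul]
  rw [← h3, ← Finset.sum_coe_sort s]
  refine Finset.sum_congr rfl fun w _ => ?_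
  simp only [Function.comp_apply]
  rw [he w w.2]

/-- Row lattice. -/
def rowLat (n : ℕ) (a : Matrix (Fin n) (Fin n) ℤ) : Submodule ℤ (Fin n → ℤ) :=
  LinearMap.range a.vecMulLinear

theorem vecMul_inj (n : ℕ) (a : Matrix (Fin n) (Fin n) ℤ) (hD : a.det ≠ 0) :
    Function.Injective a.vecMulLinear := by
  rw [injective_iff_map_eq_zero]
  intro v hv
  exact Matrix.eq_zero_of_vecMul_eq_zero hD hv

theorem card_quot (n : ℕ) (a : Matrix (Fin n) (Fin n) ℤ) (hD : a.det ≠ 0) :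
    Nat.card ((Fin n → ℤ) ⧸ rowLat n a) = a.det.natAbs := by
  let e := LinearEquiv.ofInjective a.vecMulLinear (vecMul_inj n a hD)
  have h := Submodule.natAbs_det_basis_change (Pi.basisFun ℤ (Fin n)) (rowLat n a)
    ((Pi.basisFun ℤ (Fin n)).map e)
  rw [← h, Pi.basisFun_det_apply]
  congr 2
  ext i j
  have h1 : (((Pi.basisFun ℤ (Fin n)).map e i : _) : Fin n → ℤ) =
      a.vecMulLinear (Pi.basisFun ℤ (Fin n) i) := by
    rw [Module.Basis.map_apply]
    rfl
  refine (congrFun h1 j).trans ?_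
  simp

/-- Coset representative. -/
def rep (n : ℕ) (a : Matrix (Fin n) (Fin n) ℤ) (c : (Fin n → ℤ) ⧸ rowLat n a) : Fin n → ℤ :=
  Quotient.out c

theorem mk_rep (n : ℕ) (a : Matrix (Fin n) (Fin n) ℤ) (c : (Fin n → ℤ) ⧸ rowLat n a) :
    (rowLat n a).mkQ (rep n a c) = c :=
  Quotient.out_eq c

theorem rep_inj (n : ℕ) (a : Matrix (Fin n) (Fin n) ℤ) (hD : a.det ≠ 0) :
    Function.Injective
      (fun p : (_ : (Fin n → ℤ) ⧸ rowLat n a) × (Fin n →₀ ℕ) =>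
        Matrix.vecMul (fun k => (p.2 k : ℤ)) a + rep n a p.1) := by
  rintro ⟨c, m⟩ ⟨c', m'⟩ h
  simp only at h
  have hc : c = c' := by
    have h2 := congrArg (rowLat n a).mkQ h
    have hz : ∀ w : Fin n → ℤ, (rowLat n a).mkQ (Matrix.vecMul w a) = 0 := by
      intro w
      rw [Submodule.mkQ_apply, Submodule.Quotient.mk_eq_zero]
      exact ⟨w, rfl⟩
    rwa [map_add, map_add, hz, hz, mk_rep, mk_rep, zero_add, zero_add] at h2
  subst hc
  have h3 := vecMul_inj n a hD (add_right_cancel h)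
  have : m = m' := by
    ext k
    exact_mod_cast congrFun h3 k
  rw [this]

/-- The monomial subfield. -/
abbrev mF (K : Type) [Field K] (n : ℕ) (a : Matrix (Fin n) (Fin n) ℤ) :
    IntermediateField K (RFF K (Fin n)) :=
  IntermediateField.adjoin K (Set.range fun i : Fin n => lmon K n (a i))

theorem lmon_mem (K : Type) [Field K] (n : ℕ) (a : Matrix (Fin n) (Fin n) ℤ)
    (v : Fin n → ℤ) (hv : v ∈ rowLat n a) : lmon K n v ∈ mF K n a := by
  obtain ⟨w, rfl⟩ := hv
  rw [Matrix.vecMulLinear_apply, lmon_vecMul]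
  exact prod_mem fun i _ => zpow_mem
    (IntermediateField.subset_adjoin K _ (Set.mem_range_self i)) _

open scoped IntermediateField.algebraAdjoinAdjoin in
theorem rep_linInd (K : Type) [Field K] (n : ℕ) (a : Matrix (Fin n) (Fin n) ℤ)
    (hD : a.det ≠ 0) :
    LinearIndependent (mF K n a) (fun c => lmon K n (rep n a c)) := by
  classical
  rw [← LinearIndependent.iff_fractionRing
    (Algebra.adjoin K (Set.range fun i : Fin n => lmon K n (a i))) (mF K n a)]
  rw [linearIndependent_iff']
  intro s g hg c hc
  have hP : ∀ c, ∃ P : MvPolynomial (Fin n) K,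
      MvPolynomial.aeval (fun i : Fin n => lmon K n (a i)) P = (g c : RFF K (Fin n)) := by
    intro c
    have h1 : ∀ z ∈ Algebra.adjoin K (Set.range fun i : Fin n => lmon K n (a i)),
        ∃ P : MvPolynomial (Fin n) K,
          MvPolynomial.aeval (fun i : Fin n => lmon K n (a i)) P = z := by
      intro z hz
      rw [Algebra.adjoin_range_eq_range_aeval] at hz
      exact hz
    exact h1 _ (g c).2
  choose P hP using hP
  have hexp : ∀ c, (g c : RFF K (Fin n)) * lmon K n (rep n a c) =
      ∑ m ∈ (P c).support, (P c).coeff m •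
        lmon K n (Matrix.vecMul (fun k => (m k : ℤ)) a + rep n a c) := by
    intro c
    rw [← hP, MvPolynomial.aeval_def, MvPolynomial.eval₂_eq', Finset.sum_mul]
    refine Finset.sum_congr rfl fun m _ => ?_
    rw [lmon_add, lmon_vecMul, Algebra.smul_def]
    simp [mul_assoc]
  have hsum : ∑ p ∈ s.sigma (fun c => (P c).support), (P p.1).coeff p.2 •
        lmon K n (Matrix.vecMul (fun k => (p.2 k : ℤ)) a + rep n a p.1) = 0 := by
    rw [Finset.sum_sigma, ← hg]
    refine Finset.sum_congr rfl fun c _ => ?_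
    rw [← hexp]
    rfl
  have hli := (lmon_linInd K n).comp _ (rep_inj n a hD)
  rw [linearIndependent_iff'] at hli
  have hz := hli _ (fun p => (P p.1).coeff p.2) hsum
  have hPc : P c = 0 := by
    by_contra hne
    obtain ⟨m, hm⟩ := MvPolynomial.support_nonempty.2 hne
    exact MvPolynomial.mem_support_iff.1 hm (hz ⟨c, m⟩ (Finset.mem_sigma.2 ⟨hc, hm⟩))
  apply Subtype.ext
  rw [← hP, hPc, map_zero]
  rfl

theorem lmon_mem_span (K : Type) [Field K] (n : ℕ) (a : Matrix (Fin n) (Fin n) ℤ)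
    (v : Fin n → ℤ) :
    lmon K n v ∈ Submodule.span (mF K n a) (Set.range fun c => lmon K n (rep n a c)) := by
  let c := (rowLat n a).mkQ v
  have hm : v - rep n a c ∈ rowLat n a := by
    rw [← Submodule.Quotient.mk_eq_zero, Submodule.Quotient.mk_sub, sub_eq_zero]
    exact (mk_rep n a c).symm
  have h : lmon K n v =
      (⟨_, lmon_mem K n a _ hm⟩ : mF K n a) • lmon K n (rep n a c) := by
    rw [IntermediateField.smul_def, smul_eq_mul, ← lmon_add, sub_add_cancel]
  rw [h]
  exact Submodule.smul_mem _ _ (Submodule.subset_span ⟨c, rfl⟩)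

theorem adjoin_Xvar_s8 (K : Type) [Field K] (n : ℕ) (F : IntermediateField K (RFF K (Fin n))) :
    IntermediateField.adjoin F (Set.range (Xvar K (Fin n))) = ⊤ := by
  rw [eq_top_iff]
  intro z _
  have hpoly : ∀ p : MvPolynomial (Fin n) K, algebraMap _ (RFF K (Fin n)) p ∈
      IntermediateField.adjoin F (Set.range (Xvar K (Fin n))) := by
    intro p
    induction p using MvPolynomial.induction_on with
    | C x =>
      have : algebraMap (MvPolynomial (Fin n) K) (RFF K (Fin n)) (MvPolynomial.C x)
          = algebraMap F (RFF K (Fin n)) (algebraMap K F x) := by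
        rw [← IsScalarTower.algebraMap_apply K F, ← MvPolynomial.algebraMap_eq,
          ← IsScalarTower.algebraMap_apply]
      rw [this]
      exact IntermediateField.algebraMap_mem _ _
    | add p q hp hq => rw [map_add]; exact add_mem hp hq
    | mul_X p i hp =>
      rw [map_mul]
      exact mul_mem hp (IntermediateField.subset_adjoin _ _ ⟨i, rfl⟩)
  obtain ⟨p, q, _, rfl⟩ := IsFractionRing.div_surjective (A := MvPolynomial (Fin n) K) z
  exact div_mem (hpoly p) (hpoly q)

theorem rep_span (K : Type) [Field K] (n : ℕ) (a : Matrix (Fin n) (Fin n) ℤ)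
    (hD : a.det ≠ 0) :
    ⊤ ≤ Submodule.span (mF K n a) (Set.range fun c => lmon K n (rep n a c)) := by
  have halg : ∀ x ∈ Set.range (Xvar K (Fin n)), IsAlgebraic (mF K n a) x := by
    rintro _ ⟨k, rfl⟩
    have hpos : 0 < a.det.natAbs := Int.natAbs_pos.2 hD
    have hmem : a.det.natAbs • (Pi.single k 1 : Fin n → ℤ) ∈ rowLat n a := by
      rw [← Submodule.Quotient.mk_eq_zero, Submodule.Quotient.mk_smul, ← card_quot n a hD]
      exact card_nsmul_eq_zero'
    have h2 := lmon_mem K n a _ hmem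
    rw [lmon_nsmul, lmon_single] at h2
    refine IsAlgebraic.of_pow hpos ?_
    exact isAlgebraic_algebraMap (⟨_, h2⟩ : mF K n a)
  have htop := (IntermediateField.adjoin_eq_top_iff_of_isAlgebraic halg).1
    (adjoin_Xvar_s8 K n (mF K n a))
  have h3 : Subalgebra.toSubmodule (Algebra.adjoin (mF K n a) (Set.range (Xvar K (Fin n)))) = ⊤ := by
    rw [htop, Algebra.top_toSubmodule]
  rw [← h3, Algebra.adjoin_eq_span, Submodule.span_le]
  intro z hz
  have : ∃ v, lmon K n v = z := by
    induction hz using Submonoid.closure_induction with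
    | mem x hx =>
      obtain ⟨k, rfl⟩ := hx
      exact ⟨_, lmon_single K n k⟩
    | one => exact ⟨0, lmon_zero K n⟩
    | mul x y _ _ hx hy =>
      obtain ⟨v, rfl⟩ := hx
      obtain ⟨w, rfl⟩ := hy
      exact ⟨v + w, lmon_add K n v w⟩
  obtain ⟨v, rfl⟩ := this
  exact lmon_mem_span K n a v

/-- **Degree of a monomial subfield (Lemma 2.11).**
Let `K(x₁,…,xₙ)` be the rational function field over a field `K` and let
`f_i = Π_{k=1}^n x_k^{a_{ik}}` (`1 ≤ i ≤ n`) be Laurent monomials with integer exponents.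
If the determinant `D` of the matrix `(a_{ik})` is nonzero, then `K(x₁,…,xₙ)` is a finite
extension of `K(f₁,…,fₙ)` of degree exactly `|D|`. -/
theorem degree_of_monomial_subfield (K : Type) [Field K] (n : ℕ)
    (a : Matrix (Fin n) (Fin n) ℤ) (hD : a.det ≠ 0) :
    FiniteDimensional
        ↥(IntermediateField.adjoin K
          (Set.range fun i : Fin n => ∏ k : Fin n, Xvar K (Fin n) k ^ a i k))
        (RFF K (Fin n)) ∧
      Module.finrank
        ↥(IntermediateField.adjoin K
          (Set.range fun i : Fin n => ∏ k : Fin n, Xvar K (Fin n) k ^ a i k))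
        (RFF K (Fin n)) = a.det.natAbs := by
  have hc := card_quot n a hD
  have : Finite ((Fin n → ℤ) ⧸ rowLat n a) :=
    Nat.finite_of_card_ne_zero (by rw [hc]; exact Int.natAbs_ne_zero.2 hD)
  let b := Module.Basis.mk (rep_linInd K n a hD) (rep_span K n a hD)
  refine ⟨Module.Finite.of_basis b, ?_⟩
  rw [← hc]
  exact Module.finrank_eq_nat_card_basis b
end
end
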